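/- Let n ≥ 2 and f ∈ C^{2n}(a,b). If the Hankel matrix K_n(t,f) = (f^{(i+j)}(t)/(i+j)!)_{1≤i,j≤n} is positive semi-definite for every t ∈ (a,b), then the Kraus matrix ([λᵢ,λⱼ,λ₀]_f)_{1≤i,j≤n} is positive semi-definite for every tuple (λ₁,...,λₙ) ∈ (a,b)^n and every λ₀ ∈ (a,b). -/

import Mathlib

open Set Matrix

/-- Rolle's theorem for finitely many zeros: between consecutive zeros of a differentiable
function there is a zero of its derivative. -/
theorem exists_finset_deriv_eq_zero {a b : ℝ} {g : ℝ → ℝ} (hg : DifferentiableOn ℝ g (Ioo a b))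
    (S : Finset ℝ) (hS : ∀ x ∈ S, x ∈ Ioo a b ∧ g x = 0) :
    ∃ T : Finset ℝ, S.card ≤ T.card + 1 ∧ Disjoint T S ∧
      (∀ x ∈ T, x ∈ Ioo a b ∧ deriv g x = 0) ∧ ∀ x ∈ T, ∃ s ∈ S, x < s := by
  induction S using Finset.induction_on_max with
  | empty => exact ⟨∅, by simp⟩
  | insert x S hx ih =>
    obtain ⟨T, hcard, hdisj, hT, hlt⟩ := ih fun y hy => hS y (Finset.mem_insert_of_mem hy)
    rcases S.eq_empty_or_nonempty with rfl | hne
    · exact ⟨∅, by simp⟩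
    set M := S.max' hne with hM
    have hMS : M ∈ S := S.max'_mem hne
    have hMx : M < x := hx M hMS
    have hxI := hS x (Finset.mem_insert_self x S)
    have hMI := hS M (Finset.mem_insert_of_mem hMS)
    have hsub : Icc M x ⊆ Ioo a b := fun y hy => ⟨hMI.1.1.trans_le hy.1, hy.2.trans_lt hxI.1.2⟩
    obtain ⟨c, hc, hc0⟩ := exists_deriv_eq_zero hMx (hg.continuousOn.mono hsub)
      (hMI.2.trans hxI.2.symm)
    have hTM : ∀ y ∈ T, y < M := fun y hy => by
      obtain ⟨s, hs, hys⟩ := hlt y hy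
      exact hys.trans_le (S.le_max' s hs)
    have hcT : c ∉ T := fun h => (hTM c h).not_gt hc.1
    have hcS : c ∉ S := fun h => (S.le_max' c h).not_gt hc.1
    have hxT : x ∉ T := fun h => (hTM x h).not_gt hMx
    refine ⟨insert c T, ?_, ?_, ?_, ?_⟩
    · rw [Finset.card_insert_of_notMem hcT]
      exact (Finset.card_insert_le x S).trans (by omega)
    · simp [hcS, hxT, hdisj, hc.2.ne']
    · intro y hy
      rcases Finset.mem_insert.1 hy with rfl | hy
      · exact ⟨hsub (Ioo_subset_Icc_self hc), hc0⟩
      · exact hT y hy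
    · intro y hy
      rcases Finset.mem_insert.1 hy with rfl | hy
      · exact ⟨x, Finset.mem_insert_self x S, hc.2⟩
      · obtain ⟨s, hs, hys⟩ := hlt y hy
        exact ⟨s, Finset.mem_insert_of_mem hs, hys⟩

/-- A `C^k` function with more than `k` zeros has a zero of its `k`-th derivative. -/
theorem exists_iteratedDeriv_eq_zero {a b : ℝ} (k : ℕ) {g : ℝ → ℝ}
    (hg : ContDiffOn ℝ k g (Ioo a b)) (S : Finset ℝ) (hS : ∀ x ∈ S, x ∈ Ioo a b ∧ g x = 0)
    (hk : k < S.card) : ∃ t ∈ Ioo a b, iteratedDeriv k g t = 0 := by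
  induction k generalizing g S with
  | zero =>
    obtain ⟨x, hx⟩ := Finset.card_pos.1 hk
    exact ⟨x, (hS x hx).1, by simpa using (hS x hx).2⟩
  | succ k ih =>
    obtain ⟨T, hcard, -, hT, -⟩ :=
      exists_finset_deriv_eq_zero (hg.differentiableOn (by simp)) S hS
    rw [iteratedDeriv_succ']
    exact ih (hg.deriv_of_isOpen isOpen_Ioo (by norm_cast)) T hT (by omega)

/-- A `C^(2m)` function with `m` double zeros and one further zero has a zero of its `2m`-th
derivative. -/
theorem exists_iteratedDeriv_eq_zero_of_double_zeros {a b z : ℝ} {g : ℝ → ℝ} (S : Finset ℝ)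
    (hg : ContDiffOn ℝ (2 * S.card : ℕ) g (Ioo a b)) (hne : S.Nonempty)
    (hS : ∀ x ∈ S, x ∈ Ioo a b ∧ g x = 0 ∧ deriv g x = 0) (hz : z ∈ Ioo a b) (hgz : g z = 0)
    (hzS : z ∉ S) : ∃ t ∈ Ioo a b, iteratedDeriv (2 * S.card) g t = 0 := by
  have hpos := hne.card_pos
  obtain ⟨k, hk⟩ : ∃ k, 2 * S.card = k + 1 := ⟨2 * S.card - 1, by omega⟩
  rw [hk] at hg ⊢
  obtain ⟨T, hcard, hdisj, hT, -⟩ :=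
    exists_finset_deriv_eq_zero (hg.differentiableOn (by simp)) (insert z S) (by
      intro x hx
      rcases Finset.mem_insert.1 hx with rfl | hx
      · exact ⟨hz, hgz⟩
      · exact ⟨(hS x hx).1, (hS x hx).2.1⟩)
  rw [Finset.card_insert_of_notMem hzS] at hcard
  rw [iteratedDeriv_succ']
  refine exists_iteratedDeriv_eq_zero k (hg.deriv_of_isOpen isOpen_Ioo (by norm_cast)) (T ∪ S)
    ?_ ?_
  · intro x hx
    rcases Finset.mem_union.1 hx with hx | hx
    · exact hT x hx
    · exact ⟨(hS x hx).1, (hS x hx).2.2⟩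
  · rw [Finset.card_union_of_disjoint (hdisj.mono_right (Finset.subset_insert z S))]
    omega

theorem Polynomial.iteratedDeriv_eval (p : Polynomial ℝ) (k : ℕ) :
    iteratedDeriv k (fun x => p.eval x) = fun x => (Polynomial.derivative^[k] p).eval x := by
  induction k generalizing p with
  | zero => simp
  | succ k ih =>
    rw [iteratedDeriv_succ', Function.iterate_succ_apply, ← ih]
    congr 1
    ext x
    simp

theorem Polynomial.iteratedDeriv_eval_of_natDegree_le {p : Polynomial ℝ} {k : ℕ}
    (hp : p.natDegree ≤ k) (t : ℝ) :
    iteratedDeriv k (fun x => p.eval x) t = k.factorial * p.coeff k := by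
  rw [Polynomial.iteratedDeriv_eval]
  have h0 : (Polynomial.derivative^[k] p).natDegree ≤ 0 :=
    (Polynomial.natDegree_iterate_derivative p k).trans (by omega)
  beta_reduce
  rw [Polynomial.eq_C_of_natDegree_le_zero h0, Polynomial.coeff_iterate_derivative]
  simp [Nat.descFactorial_self]

theorem iteratedDeriv_sub_pow_mul_self {f : ℝ → ℝ} {t : ℝ} {N k : ℕ} (hf : ContDiffAt ℝ N f t)
    (hk : k ≤ N) :
    iteratedDeriv N (fun x => (x - t) ^ k * f x) t =
      N.factorial * (iteratedDeriv (N - k) f t / (N - k).factorial) := by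
  have hpow : ∀ i, iteratedDeriv i (fun x : ℝ => (x - t) ^ k) t =
      if i = k then (k.factorial : ℝ) else 0 := fun i => by
    rw [iteratedDeriv_comp_sub_const i (fun x : ℝ => x ^ k) t]
    simp only [sub_self]
    rw [iteratedDeriv_fun_pow_zero]
    simp
  rw [iteratedDeriv_fun_mul (by fun_prop) hf, Finset.sum_eq_single k]
  · rw [hpow, if_pos rfl, ← Nat.choose_mul_factorial_mul_factorial hk]
    have := Nat.factorial_ne_zero (N - k)
    push_cast
    field_simp
  · intro i _ hi
    simp [hpow, hi]
  · intro h
    exact absurd (Finset.mem_range.2 (by omega)) h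

/-- If the Hankel matrix of the Taylor coefficients of `f` at `t` is positive semidefinite, then
the `2m`-th derivative of `P² f` at `t` is nonnegative for polynomials `P` of degree `< m`. -/
theorem iteratedDeriv_sq_mul_nonneg {m : ℕ} {f : ℝ → ℝ} {t : ℝ}
    (hf : ContDiffAt ℝ (2 * m : ℕ) f t)
    (hK : (Matrix.of fun i j : Fin m => iteratedDeriv (i.val + j.val + 2) f t /
      (Nat.factorial (i.val + j.val + 2) : ℝ)).PosSemidef)
    {P : Polynomial ℝ} (hP : P.natDegree < m) :
    0 ≤ iteratedDeriv (2 * m) (fun x => P.eval x ^ 2 * f x) t := by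
  set c : Fin m → ℝ := fun i => (Polynomial.taylor t P).coeff i with hc
  have heval : ∀ x, P.eval x = ∑ i, c i * (x - t) ^ (i : ℕ) := fun x => by
    rw [← Polynomial.taylor_eval_sub t, Polynomial.eval_eq_sum_range'
      (by rwa [Polynomial.natDegree_taylor] : (Polynomial.taylor t P).natDegree < m),
      Finset.sum_range]
  have hfun : (fun x => P.eval x ^ 2 * f x) =
      fun x => ∑ i : Fin m, ∑ j : Fin m, (c i * c j) * ((x - t) ^ (i + j : ℕ) * f x) := by
    ext x
    rw [heval, sq, Finset.sum_mul_sum, Finset.sum_mul]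
    refine Finset.sum_congr rfl fun i _ => ?_
    rw [Finset.sum_mul]
    exact Finset.sum_congr rfl fun j _ => by ring
  have hterm : ∀ k : ℕ, ContDiffAt ℝ (2 * m : ℕ) (fun x => (x - t) ^ k * f x) t := fun k =>
    ContDiffAt.mul (by fun_prop) hf
  rw [hfun, iteratedDeriv_fun_sum fun i _ => ContDiffAt.sum fun j _ => contDiffAt_const.mul
    (hterm _)]
  have key := hK.dotProduct_mulVec_nonneg fun i => c i.rev
  have hsum : ∀ i : Fin m, iteratedDeriv (2 * m)
      (fun x => ∑ j : Fin m, (c i * c j) * ((x - t) ^ (i + j : ℕ) * f x)) t =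
      ∑ j : Fin m, (c i * c j) * ((2 * m).factorial *
        (iteratedDeriv (2 * m - (i + j)) f t / (2 * m - (i + j)).factorial)) := fun i => by
    rw [iteratedDeriv_fun_sum fun j _ => contDiffAt_const.mul (hterm _)]
    refine Finset.sum_congr rfl fun j _ => ?_
    rw [iteratedDeriv_const_mul_field, iteratedDeriv_sub_pow_mul_self hf (by omega)]
  simp only [hsum]
  refine (mul_nonneg (Nat.cast_nonneg (2 * m).factorial) key).trans_eq ?_
  simp only [dotProduct, mulVec, Matrix.of_apply, Finset.mul_sum, star_trivial]
  rw [← Equiv.sum_comp Fin.revPerm]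
  refine Finset.sum_congr rfl fun i _ => ?_
  rw [← Equiv.sum_comp Fin.revPerm]
  refine Finset.sum_congr rfl fun j _ => ?_
  have h : (Fin.revPerm i).val + (Fin.revPerm j).val + 2 = 2 * m - (i + j) := by
    simp only [Fin.revPerm_apply, Fin.val_rev]
    omega
  rw [h]
  simp only [Fin.revPerm_apply, Fin.rev_rev]
  ring

theorem Polynomial.contDiff_eval {k : WithTop ℕ∞} (p : Polynomial ℝ) :
    ContDiff ℝ k fun x => p.eval x := by
  simpa only [Polynomial.coe_aeval_eq_eval] using p.contDiff_aeval (𝕜 := ℝ) k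

theorem HasDerivAt.mul_of_eq_zero {p q : ℝ → ℝ} {p' q' u : ℝ} (hp : HasDerivAt p p' u)
    (hq : HasDerivAt q q' u) (hp0 : p u = 0) (hq0 : q u = 0) :
    HasDerivAt (fun x => p x * q x) 0 u := by
  simpa [hp0, hq0] using hp.fun_mul hq

/-- The Kraus quadratic form is nonnegative for distinct nodes `S` and a further node `z ∉ S`.
Here `e` and `D` are the first divided differences of `f` and the second ones involving `z`. -/
theorem sum_sum_dividedDifference_nonneg {a b z : ℝ} {f : ℝ → ℝ} (S : Finset ℝ)
    (hf : ContDiffOn ℝ (2 * S.card : ℕ) f (Ioo a b))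
    (hK : ∀ t ∈ Ioo a b, (Matrix.of fun i j : Fin S.card =>
      iteratedDeriv (i.val + j.val + 2) f t /
        (Nat.factorial (i.val + j.val + 2) : ℝ)).PosSemidef)
    (hS : ∀ s ∈ S, s ∈ Ioo a b) (hz : z ∈ Ioo a b) (hzS : z ∉ S) (d : ℝ → ℝ)
    (e D : ℝ → ℝ → ℝ) (he : ∀ s ∈ S, ∀ t ∈ S, f s - f t = (s - t) * e s t)
    (hdiag : ∀ s ∈ S, HasDerivAt f (e s s) s)
    (hD : ∀ s ∈ S, ∀ t ∈ S, f z = f s + (z - s) * e s t + (z - s) * (z - t) * D s t) :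
    0 ≤ ∑ s ∈ S, ∑ t ∈ S, d s * d t * D s t := by
  classical
  rcases S.eq_empty_or_nonempty with rfl | hne
  · simp
  have hpos := hne.card_pos
  set W : ℝ → Polynomial ℝ := fun s => ∏ u ∈ S.erase s, (Polynomial.X - Polynomial.C u) with hW
  have hW0 : ∀ s, ∀ u ∈ S, u ≠ s → (W s).eval u = 0 := fun s u hu hus => by
    rw [hW, Polynomial.eval_prod]
    exact Finset.prod_eq_zero (Finset.mem_erase.2 ⟨hus, hu⟩) (by simp)
  have hWdeg : ∀ s ∈ S, (W s).natDegree = S.card - 1 := fun s hs => by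
    rw [hW, Polynomial.natDegree_finsetProd_X_sub_C_eq_card, Finset.card_erase_of_mem hs]
  have hWmul : ∀ s ∈ S, W s * (Polynomial.X - Polynomial.C s) =
      ∏ u ∈ S, (Polynomial.X - Polynomial.C u) := fun s hs =>
    Finset.prod_erase_mul S (fun u => Polynomial.X - Polynomial.C u) hs
  set P : Polynomial ℝ := ∑ s ∈ S, Polynomial.C (d s) * W s with hP
  have hPdeg : P.natDegree < S.card := by
    refine (Polynomial.natDegree_sum_le_of_forall_le S _ (n := S.card - 1) fun s hs =>
      (Polynomial.natDegree_C_mul_le _ _).trans (hWdeg s hs).le).trans_lt (by omega)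
  set E : ℝ → ℝ → Polynomial ℝ := fun s t => Polynomial.C (f s) +
    (Polynomial.X - Polynomial.C s) * Polynomial.C (e s t) +
    (Polynomial.X - Polynomial.C s) * (Polynomial.X - Polynomial.C t) * Polynomial.C (D s t)
    with hE
  set R : Polynomial ℝ := ∑ s ∈ S, ∑ t ∈ S, Polynomial.C (d s * d t) * (W s * W t * E s t)
    with hR
  have hterm : ∀ s ∈ S, ∀ t ∈ S, (W s * W t * E s t).natDegree ≤ 2 * S.card ∧
      (W s * W t * E s t).coeff (2 * S.card) = D s t := by
    intro s hs t ht
    set V := W s * W t * Polynomial.C (f s) +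
      W s * W t * (Polynomial.X - Polynomial.C s) * Polynomial.C (e s t) with hV
    set Q := ∏ u ∈ S, (Polynomial.X - Polynomial.C u) with hQ
    have hsplit : W s * W t * E s t = V + Polynomial.C (D s t) * (Q * Q) := by
      nth_rewrite 1 [← hWmul s hs]
      rw [← hWmul t ht]
      simp only [hE, hV]
      ring
    have hVdeg : V.natDegree < 2 * S.card := by
      have hWW : (W s * W t).natDegree ≤ 2 * S.card - 2 :=
        Polynomial.natDegree_mul_le.trans (by rw [hWdeg s hs, hWdeg t ht]; omega)
      have h1 : (W s * W t * (Polynomial.X - Polynomial.C s)).natDegree ≤ 2 * S.card - 1 :=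
        Polynomial.natDegree_mul_le.trans (by rw [Polynomial.natDegree_X_sub_C]; omega)
      have h2 : V.natDegree ≤ 2 * S.card - 1 := Polynomial.natDegree_add_le_of_degree_le
        ((Polynomial.natDegree_mul_C_le _ _).trans (hWW.trans (by omega)))
        ((Polynomial.natDegree_mul_C_le _ _).trans h1)
      omega
    have hQm : Q.Monic := Polynomial.monic_prod_X_sub_C _ _
    have hQQ : (Q * Q).natDegree = 2 * S.card := by
      rw [hQm.natDegree_mul hQm, hQ, Polynomial.natDegree_finsetProd_X_sub_C_eq_card, two_mul]
    rw [hsplit]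
    constructor
    · exact Polynomial.natDegree_add_le_of_degree_le hVdeg.le
        ((Polynomial.natDegree_C_mul_le _ _).trans hQQ.le)
    · rw [Polynomial.coeff_add, Polynomial.coeff_eq_zero_of_natDegree_lt hVdeg,
        Polynomial.coeff_C_mul, ← hQQ, (hQm.mul hQm).coeff_natDegree]
      ring
  have hRdeg : R.natDegree ≤ 2 * S.card :=
    Polynomial.natDegree_sum_le_of_forall_le S _ fun s hs =>
      Polynomial.natDegree_sum_le_of_forall_le S _ fun t ht =>
        (Polynomial.natDegree_C_mul_le _ _).trans (hterm s hs t ht).1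
  have hRcoeff : R.coeff (2 * S.card) = ∑ s ∈ S, ∑ t ∈ S, d s * d t * D s t := by
    simp only [hR, Polynomial.finsetSum_coeff, Polynomial.coeff_C_mul]
    exact Finset.sum_congr rfl fun s hs => Finset.sum_congr rfl fun t ht => by
      rw [(hterm s hs t ht).2]
  set F : ℝ → ℝ := fun x => P.eval x ^ 2 * f x - R.eval x with hF
  have hFsum : ∀ x, F x = ∑ s ∈ S, ∑ t ∈ S,
      d s * d t * ((W s).eval x * (W t).eval x * (f x - (E s t).eval x)) := fun x => by
    simp only [hF, hP, hR, Polynomial.eval_finsetSum, Polynomial.eval_mul, Polynomial.eval_C]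
    rw [sq, Finset.sum_mul_sum, Finset.sum_mul, ← Finset.sum_sub_distrib]
    refine Finset.sum_congr rfl fun s _ => ?_
    rw [Finset.sum_mul, ← Finset.sum_sub_distrib]
    exact Finset.sum_congr rfl fun t _ => by ring
  have hEs : ∀ s ∈ S, ∀ t ∈ S, f s - (E s t).eval s = 0 := fun s hs t ht => by simp [hE]
  have hEt : ∀ s ∈ S, ∀ t ∈ S, f t - (E s t).eval t = 0 := fun s hs t ht => by
    simp only [hE, Polynomial.eval_add, Polynomial.eval_mul, Polynomial.eval_sub,
      Polynomial.eval_X, Polynomial.eval_C]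
    linear_combination -he s hs t ht
  have hEss : ∀ s ∈ S, HasDerivAt (fun x => f x - (E s s).eval x) 0 s := fun s hs => by
    refine ((hdiag s hs).fun_sub ((E s s).hasDerivAt s)).congr_deriv ?_
    simp [hE]
  have hzero : ∀ u ∈ S, F u = 0 := fun u hu => by
    rw [hFsum]
    refine Finset.sum_eq_zero fun s hs => Finset.sum_eq_zero fun t ht => ?_
    by_cases hus : u = s
    · subst hus
      rw [hEs u hu t ht]
      ring
    · rw [hW0 s u hu hus]
      ring
  have hderiv : ∀ u ∈ S, HasDerivAt F 0 u := fun u hu => by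
    rw [funext hFsum, show (0 : ℝ) = ∑ s ∈ S, ∑ t ∈ S, d s * d t * 0 by simp]
    refine HasDerivAt.fun_sum fun s hs => HasDerivAt.fun_sum fun t ht =>
      HasDerivAt.const_mul _ ?_
    have hWs := (W s).hasDerivAt u
    have hWt := (W t).hasDerivAt u
    have hEd := (hdiag u hu).fun_sub ((E s t).hasDerivAt u)
    by_cases hus : u = s
    · subst hus
      by_cases hut : u = t
      · subst hut
        simpa [hEs u hu u hu] using (hWs.fun_mul hWt).fun_mul (hEss u hu)
      · refine (hWt.mul_of_eq_zero (hWs.fun_mul hEd) (hW0 t u hu hut)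
          (by rw [hEs u hu t ht, mul_zero])).congr_of_eventuallyEq
          (Filter.Eventually.of_forall fun x => by ring)
    · refine (hWs.mul_of_eq_zero (hWt.fun_mul hEd) (hW0 s u hu hus) ?_).congr_of_eventuallyEq
        (Filter.Eventually.of_forall fun x => by ring)
      by_cases hut : u = t
      · subst hut
        rw [hEt s hs u hu, mul_zero]
      · rw [hW0 t u hu hut, zero_mul]
  have hFz : F z = 0 := by
    rw [hFsum]
    refine Finset.sum_eq_zero fun s hs => Finset.sum_eq_zero fun t ht => ?_
    have : f z - (E s t).eval z = 0 := by
      simp only [hE, Polynomial.eval_add, Polynomial.eval_mul, Polynomial.eval_sub,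
        Polynomial.eval_X, Polynomial.eval_C]
      linear_combination hD s hs t ht
    rw [this]
    ring
  have hPf : ContDiffOn ℝ (2 * S.card : ℕ) (fun x => P.eval x ^ 2 * f x) (Ioo a b) :=
    ((Polynomial.contDiff_eval P).pow 2).contDiffOn.mul hf
  obtain ⟨t, ht, hFt⟩ := exists_iteratedDeriv_eq_zero_of_double_zeros S
    (hPf.sub (Polynomial.contDiff_eval R).contDiffOn) hne
    (fun x hx => ⟨hS x hx, hzero x hx, (hderiv x hx).deriv⟩) hz hFz hzS
  have hnhds : Ioo a b ∈ nhds t := isOpen_Ioo.mem_nhds ht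
  rw [iteratedDeriv_fun_sub (hPf.contDiffAt hnhds) (Polynomial.contDiff_eval R).contDiffAt,
    Polynomial.iteratedDeriv_eval_of_natDegree_le hRdeg, hRcoeff] at hFt
  have hnonneg := iteratedDeriv_sq_mul_nonneg (hf.contDiffAt hnhds) (hK t ht) hPdeg
  have hfact : (0 : ℝ) < (2 * S.card).factorial := by exact_mod_cast Nat.factorial_pos _
  rw [sub_eq_zero.1 hFt] at hnonneg
  exact nonneg_of_mul_nonneg_right hnonneg hfact

/-- The first divided difference of a `C^2` function, with one node fixed at `x`, is
differentiable at `x`. -/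
theorem differentiableAt_dividedDifference {U : Set ℝ} (hU : IsOpen U) (hconv : Convex ℝ U)
    {f g : ℝ → ℝ} {x : ℝ} (hx : x ∈ U) (hf : ContDiffOn ℝ 2 f U)
    (hg : ∀ s, f s - f x = (s - x) * g s) (hgx : g x = derivWithin f U x) :
    DifferentiableAt ℝ g x := by
  have htaylor := taylor_tendsto (n := 2) hconv hx (by exact_mod_cast hf)
  rw [hU.nhdsWithin_eq hx] at htaylor
  set c := iteratedDerivWithin 2 f U x / 2 with hc
  have hslope : Filter.Tendsto (slope g x) (nhdsWithin x {x}ᶜ) (nhds c) := by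
    have h := (htaylor.mono_left (nhdsWithin_le_nhds (s := {x}ᶜ))).add_const c
    rw [zero_add] at h
    refine h.congr' ?_
    filter_upwards [self_mem_nhdsWithin] with s hs
    have hs' : s - x ≠ 0 := sub_ne_zero.2 hs
    have hfs := hg s
    simp only [taylorWithinEval_succ, taylor_within_zero_eval, iteratedDerivWithin_one,
      slope_def_field, smul_eq_mul, zero_add, hgx, hc]
    norm_num
    field_simp
    linear_combination 2 * hfs
  exact (hasDerivAt_iff_tendsto_slope.2 hslope).differentiableAt

theorem eventually_ne_nhdsNE (x z : ℝ) : ∀ᶠ y in nhdsWithin z {z}ᶜ, y ≠ x := by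
  rcases eq_or_ne x z with rfl | h
  · exact self_mem_nhdsWithin
  · exact nhdsWithin_le_nhds (isOpen_ne.mem_nhds h.symm)

/-- If the Hankel matrix `K_n(t,f)` is positive semi-definite for all `t ∈ (a,b)`, then every
Kraus matrix `([λᵢ,λⱼ,λ₀]_f)` with `λ₁,…,λₙ, λ₀ ∈ (a,b)` is positive semi-definite.
Here `dd1` and `dd2` are the first- and second-order divided differences of `f` (extended
continuously to coinciding points). -/
theorem stmt16 (n : ℕ) (hn : 2 ≤ n) (a b : ℝ) (f : ℝ → ℝ)
    (hf : ContDiffOn ℝ (2 * n : ℕ) f (Ioo a b))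
    (hK : ∀ t ∈ Ioo a b,
      (Matrix.of fun i j : Fin n =>
        iteratedDerivWithin (i.val + j.val + 2) f (Ioo a b) t /
          (Nat.factorial (i.val + j.val + 2) : ℝ)).PosSemidef)
    (dd1 : ℝ → ℝ → ℝ)
    (hdd1 : ∀ x y, dd1 x y = if x = y then derivWithin f (Ioo a b) x
      else (f x - f y) / (x - y))
    (dd2 : ℝ → ℝ → ℝ → ℝ)
    (hdd2 : ∀ x y z, dd2 x y z = if x = z then derivWithin (fun s => dd1 s y) (Ioo a b) x
      else (dd1 x y - dd1 y z) / (x - z)) :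
    ∀ (lam : Fin n → ℝ) (lam0 : ℝ), (∀ i, lam i ∈ Ioo a b) → lam0 ∈ Ioo a b →
      (Matrix.of fun i j : Fin n => dd2 (lam i) (lam j) lam0).PosSemidef := by
  classical
  intro lam z₀ hlam hz₀
  have hf2 : ContDiffOn ℝ 2 f (Ioo a b) := hf.of_le (by norm_cast; omega)
  have hmul : ∀ x y, f x - f y = (x - y) * dd1 x y := fun x y => by
    rw [hdd1]
    split_ifs with h
    · simp [h]
    · rw [mul_div_cancel₀ _ (sub_ne_zero.2 h)]
  have hself : ∀ x, dd1 x x = derivWithin f (Ioo a b) x := fun x => by rw [hdd1, if_pos rfl]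
  have hcomm : ∀ x y, dd1 x y = dd1 y x := fun x y => by
    rcases eq_or_ne x y with rfl | h
    · rfl
    · refine mul_left_cancel₀ (sub_ne_zero.2 h) ?_
      linear_combination -hmul x y - hmul y x
  have hdiag : ∀ x ∈ Ioo a b, HasDerivAt f (dd1 x x) x := fun x hx => by
    rw [hself, derivWithin_of_isOpen isOpen_Ioo hx]
    exact ((hf2.differentiableOn (by simp)).differentiableAt
      (isOpen_Ioo.mem_nhds hx)).hasDerivAt
  have hdiff : ∀ x ∈ Ioo a b, ∀ y, DifferentiableAt ℝ (fun s => dd1 s y) x := by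
    intro x hx y
    rcases eq_or_ne x y with rfl | h
    · exact differentiableAt_dividedDifference isOpen_Ioo (convex_Ioo a b) hx hf2
        (fun s => hmul s x) (hself x)
    · have hquot : DifferentiableAt ℝ (fun s => (f s - f y) / (s - y)) x :=
        ((hdiag x hx).differentiableAt.sub_const _).fun_div (by fun_prop) (sub_ne_zero.2 h)
      refine hquot.congr_of_eventuallyEq ?_
      filter_upwards [isOpen_ne.mem_nhds h] with s hs
      rw [hdd1, if_neg hs]
  have hdd2_of_ne : ∀ x y z, z ≠ x → dd2 x y z = (dd1 x y - dd1 z y) / (x - z) :=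
    fun x y z h => by rw [hdd2, if_neg h.symm, hcomm y z]
  have htend : ∀ x y, Filter.Tendsto (fun z => dd2 x y z) (nhdsWithin z₀ {z₀}ᶜ)
      (nhds (dd2 x y z₀)) := by
    intro x y
    have hev : (fun z => (dd1 x y - dd1 z y) / (x - z)) =ᶠ[nhdsWithin z₀ {z₀}ᶜ]
        fun z => dd2 x y z := by
      filter_upwards [eventually_ne_nhdsNE x z₀] with z hz
      rw [hdd2_of_ne x y z hz]
    refine Filter.Tendsto.congr' hev ?_
    have hd := hdiff z₀ hz₀ y
    rcases eq_or_ne z₀ x with rfl | h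
    · rw [hdd2, if_pos rfl, derivWithin_of_isOpen isOpen_Ioo hz₀]
      refine hd.hasDerivAt.tendsto_slope.congr fun z => ?_
      rw [slope_comm, slope_def_field]
    · rw [hdd2_of_ne x y z₀ h]
      refine Filter.Tendsto.mono_left ?_ nhdsWithin_le_nhds
      exact (tendsto_const_nhds.sub hd.continuousAt).div
        (tendsto_const_nhds.sub Filter.tendsto_id) (sub_ne_zero.2 h.symm)
  have hinterp : ∀ x y z, z ≠ x →
      f z = f x + (z - x) * dd1 x y + (z - x) * (z - y) * dd2 x y z := by
    intro x y z h
    have h' : x - z ≠ 0 := sub_ne_zero.2 h.symm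
    have hD : dd2 x y z * (x - z) = dd1 x y - dd1 z y := by
      rw [hdd2_of_ne x y z h, div_mul_cancel₀ _ h']
    linear_combination hmul z y - hmul x y + (z - y) * hD
  have hsymm : ∀ x y, dd2 x y z₀ = dd2 y x z₀ := by
    intro x y
    refine tendsto_nhds_unique_of_eventuallyEq (htend x y) (htend y x) ?_
    filter_upwards [eventually_ne_nhdsNE x z₀, eventually_ne_nhdsNE y z₀] with z hx hy
    refine mul_left_cancel₀ (mul_ne_zero (sub_ne_zero.2 hx) (sub_ne_zero.2 hy)) ?_
    linear_combination hinterp y x z hy - hinterp x y z hx - hmul x y - (z - y) * hcomm x y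
  refine PosSemidef.of_dotProduct_mulVec_nonneg ?_ fun c => ?_
  · ext i j
    simp [hsymm (lam j) (lam i)]
  simp only [dotProduct, mulVec, Matrix.of_apply, star_trivial]
  have hlim : Filter.Tendsto (fun z => ∑ i, c i * ∑ j, dd2 (lam i) (lam j) z * c j)
      (nhdsWithin z₀ {z₀}ᶜ) (nhds (∑ i, c i * ∑ j, dd2 (lam i) (lam j) z₀ * c j)) :=
    tendsto_finsetSum _ fun i _ => (tendsto_finsetSum _ fun j _ =>
      (htend _ _).mul_const _).const_mul _
  refine ge_of_tendsto hlim ?_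
  filter_upwards [Filter.eventually_all.2 fun i => eventually_ne_nhdsNE (lam i) z₀,
    nhdsWithin_le_nhds (isOpen_Ioo.mem_nhds hz₀)] with z hz hzI
  set S : Finset ℝ := Finset.univ.image lam with hS
  have hSmem : ∀ s ∈ S, s ∈ Ioo a b ∧ z ≠ s := fun s hs => by
    obtain ⟨i, -, rfl⟩ := Finset.mem_image.1 hs
    exact ⟨hlam i, hz i⟩
  have hcard : S.card ≤ n := Finset.card_image_le.trans (by simp)
  set d : ℝ → ℝ := fun s => ∑ i with lam i = s, c i with hd
  have hagg : ∀ g : ℝ → ℝ, ∑ i, c i * g (lam i) = ∑ s ∈ S, d s * g s := fun g => by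
    rw [← Finset.sum_fiberwise_of_maps_to (t := S) (g := lam)
      fun i _ => Finset.mem_image_of_mem lam (Finset.mem_univ i)]
    refine Finset.sum_congr rfl fun s _ => ?_
    rw [hd, Finset.sum_mul]
    refine Finset.sum_congr rfl fun i hi => ?_
    rw [(Finset.mem_filter.1 hi).2]
  have hform : ∑ i, c i * ∑ j, dd2 (lam i) (lam j) z * c j =
      ∑ s ∈ S, ∑ t ∈ S, d s * d t * dd2 s t z := by
    have hinner : ∀ x, ∑ j, dd2 x (lam j) z * c j = ∑ t ∈ S, d t * dd2 x t z := fun x => by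
      rw [← hagg fun t => dd2 x t z]
      exact Finset.sum_congr rfl fun j _ => mul_comm _ _
    simp only [hinner]
    rw [hagg (fun x => ∑ t ∈ S, d t * dd2 x t z)]
    simp only [Finset.mul_sum, mul_assoc]
  rw [hform]
  refine sum_sum_dividedDifference_nonneg S (hf.of_le (by norm_cast; omega)) ?_
    (fun s hs => (hSmem s hs).1) hzI (fun h => (hSmem z h).2 rfl) d dd1 (fun s t => dd2 s t z)
    (fun s _ t _ => hmul s t) (fun s hs => hdiag s (hSmem s hs).1)
    (fun s hs t _ => hinterp s t z (hSmem s hs).2)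
  intro t ht
  convert (hK t ht).submatrix (Fin.castLE hcard) using 1
  ext i j
  simp [iteratedDerivWithin_of_isOpen isOpen_Ioo ht]
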